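/- arXiv:2508.12772 — 2 statements merged into one kernel-verified Lean document; each statement's English description precedes it below -/
import Mathlib

section
/- For any Borel probability measure on ℝ with cumulative distribution function F and characteristic function f, one has sup_{x∈ℝ} |F(x) − Φ(x)| ≤ (1/π) ∫_{−∞}^{+∞} |(f(θ) − e^{−θ²/2})/θ| dθ, the inequality being trivially true when the right-hand side is infinite. -/
open MeasureTheory Filter

/-! Let `φ` be a smooth function on `ℝ` which climbs from `0` to `1` far to the left and descends
from `1` to `0` just to the right of `x`. By Fourier inversion, `∫ φ dμ - ∫ φ dν` is the integral of
`𝓕 φ` against the difference of the characteristic functions of `μ` and `ν`. Up to a constant,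
`θ * 𝓕 φ θ` is the Fourier transform of `φ'`, so it is bounded by the total variation of `φ`. This
variation is at most `2`, no matter how steep the descent, so one can let `φ` tend to the indicator
function of `(-∞, x]`. -/

open ProbabilityTheory Set
open scoped FourierTransform Real SchwartzMap Topology

section Fourier

variable {V E : Type*} [NormedAddCommGroup V] [InnerProductSpace ℝ V] [MeasurableSpace V]
  [NormedAddCommGroup E] [NormedSpace ℂ E]

theorem charFun_two_pi_smul (μ : Measure V) (w : V) :
    charFun μ ((2 * π) • w) =
      VectorFourier.fourierIntegral Real.fourierChar μ (-innerₗ V) 1 w := by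
  simp [charFun_apply, VectorFourier.fourierIntegral, Circle.smul_def, Real.fourierChar_apply,
    inner_smul_right]

theorem integral_eq_integral_charFun_smul_fourier [BorelSpace V] [FiniteDimensional ℝ V]
    [CompleteSpace E] {φ : V → E} (hφ : Continuous φ) (hφi : Integrable φ) (hφf : Integrable (𝓕 φ))
    (μ : Measure V) [IsFiniteMeasure μ] :
    ∫ v, φ v ∂μ = ∫ w, charFun μ ((2 * π) • w) • 𝓕 φ w := by
  have hflip := VectorFourier.integral_fourierIntegral_smul_eq_flip (μ := μ) (L := -innerₗ V)
    (f := 1) Real.continuous_fourierChar (by simpa using! continuous_inner.neg)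
    (integrable_const 1) hφf
  have hinv (v : V) :
      VectorFourier.fourierIntegral Real.fourierChar volume (-innerₗ V).flip (𝓕 φ) v = φ v := by
    rw [← congrFun (hφ.fourierInv_fourier_eq hφi hφf) v, Real.fourierInv_eq]
    simp [VectorFourier.fourierIntegral, real_inner_comm v]
  simpa only [← charFun_two_pi_smul, hinv, Pi.one_apply, one_smul] using hflip.symm

theorem integral_eq_integral_charFun_smul_fourier_real [CompleteSpace E] (φ : 𝓢(ℝ, E))
    (μ : Measure ℝ) [IsFiniteMeasure μ] :
    ∫ y, φ y ∂μ = (2 * π)⁻¹ • ∫ θ : ℝ, charFun μ θ • 𝓕 (φ : ℝ → E) (θ / (2 * π)) := by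
  have hφf : Integrable (𝓕 (φ : ℝ → E)) := by
    simpa only [SchwartzMap.fourier_coe] using (𝓕 φ).integrable
  have hscale := Measure.integral_comp_mul_left
    (fun θ => charFun μ θ • 𝓕 (φ : ℝ → E) (θ / (2 * π))) (2 * π)
  rw [abs_of_pos (by positivity)] at hscale
  rw [← hscale, integral_eq_integral_charFun_smul_fourier φ.continuous φ.integrable hφf]
  simp only [smul_eq_mul, mul_div_cancel_left₀ _ Real.two_pi_pos.ne']

theorem integral_sub_integral_eq_integral_charFun_sub_smul_fourier [CompleteSpace E]
    (φ : 𝓢(ℝ, E)) (μ ν : Measure ℝ) [IsFiniteMeasure μ] [IsFiniteMeasure ν] :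
    ∫ y, φ y ∂μ - ∫ y, φ y ∂ν = (2 * π)⁻¹ •
      ∫ θ : ℝ, (charFun μ θ - charFun ν θ) • 𝓕 (φ : ℝ → E) (θ / (2 * π)) := by
  have hφf : Integrable fun θ : ℝ => 𝓕 (φ : ℝ → E) (θ / (2 * π)) := by
    simpa only [SchwartzMap.fourier_coe] using (𝓕 φ).integrable.comp_div Real.two_pi_pos.ne'
  have hint (ρ : Measure ℝ) [IsFiniteMeasure ρ] :
      Integrable fun θ : ℝ => charFun ρ θ • 𝓕 (φ : ℝ → E) (θ / (2 * π)) :=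
    hφf.bdd_smul (ρ.real univ) (by fun_prop) (ae_of_all _ norm_charFun_le)
  simp only [sub_smul, integral_sub (hint μ) (hint ν), smul_sub,
    integral_eq_integral_charFun_smul_fourier_real]

theorem enorm_fourier_le_lintegral_enorm [BorelSpace V] [FiniteDimensional ℝ V] (f : V → E)
    (w : V) : ‖𝓕 f w‖ₑ ≤ ∫⁻ v, ‖f v‖ₑ :=
  calc ‖𝓕 f w‖ₑ ≤ ∫⁻ v, ‖Real.fourierChar (-inner ℝ v w) • f v‖ₑ :=
        enorm_integral_le_lintegral_enorm _
    _ = ∫⁻ v, ‖f v‖ₑ := by simp only [← ofReal_norm, Circle.norm_smul]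

theorem enorm_smul_fourier_le_lintegral_enorm_deriv_mul {φ : ℝ → E} (hφ : Integrable φ)
    (hφ' : Differentiable ℝ φ) (hdφ : Integrable (deriv φ)) (c : ℂ) {θ : ℝ} (hθ : θ ≠ 0) :
    ‖c • 𝓕 φ (θ / (2 * π))‖ₑ ≤ (∫⁻ y, ‖deriv φ y‖ₑ) * ‖c / θ‖ₑ := by
  have hderiv : 𝓕 (deriv φ) (θ / (2 * π)) =
      (Complex.I * θ) • 𝓕 φ (θ / (2 * π)) := by
    rw [Real.fourier_deriv hφ hφ' hdφ]
    push_cast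
    field_simp
  have hdiv : c • 𝓕 φ (θ / (2 * π)) =
      (c / (Complex.I * θ)) • 𝓕 (deriv φ) (θ / (2 * π)) := by
    rw [hderiv, smul_smul, div_mul_cancel₀ c
      (mul_ne_zero Complex.I_ne_zero (Complex.ofReal_ne_zero.2 hθ))]
  have hnorm : ‖c / (Complex.I * θ)‖ₑ = ‖c / θ‖ₑ := by simp [← ofReal_norm]
  calc ‖c • 𝓕 φ (θ / (2 * π))‖ₑ
      = ‖𝓕 (deriv φ) (θ / (2 * π))‖ₑ * ‖c / θ‖ₑ := by
        rw [hdiv, enorm_smul, hnorm, mul_comm]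
    _ ≤ (∫⁻ y, ‖deriv φ y‖ₑ) * ‖c / θ‖ₑ := by
        gcongr
        exact enorm_fourier_le_lintegral_enorm _ _

theorem enorm_integral_sub_integral_le [CompleteSpace E] (φ : 𝓢(ℝ, E)) (μ ν : Measure ℝ)
    [IsFiniteMeasure μ] [IsFiniteMeasure ν] :
    ‖∫ y, φ y ∂μ - ∫ y, φ y ∂ν‖ₑ ≤ ENNReal.ofReal (2 * π)⁻¹ *
      ((∫⁻ y, ‖deriv φ y‖ₑ) * ∫⁻ θ : ℝ, ‖(charFun μ θ - charFun ν θ) / θ‖ₑ) := by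
  rw [integral_sub_integral_eq_integral_charFun_sub_smul_fourier, enorm_smul,
    Real.enorm_of_nonneg (by positivity)]
  gcongr
  calc ‖∫ θ : ℝ, (charFun μ θ - charFun ν θ) • 𝓕 (φ : ℝ → E) (θ / (2 * π))‖ₑ
      ≤ ∫⁻ θ : ℝ, ‖(charFun μ θ - charFun ν θ) • 𝓕 (φ : ℝ → E) (θ / (2 * π))‖ₑ :=
        enorm_integral_le_lintegral_enorm _
    _ ≤ ∫⁻ θ : ℝ, (∫⁻ y, ‖deriv φ y‖ₑ) * ‖(charFun μ θ - charFun ν θ) / θ‖ₑ := by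
        refine lintegral_mono_ae ?_
        filter_upwards [volume.ae_ne 0] with θ hθ
        exact enorm_smul_fourier_le_lintegral_enorm_deriv_mul φ.integrable φ.differentiable
          (SchwartzMap.derivCLM ℝ E φ).integrable _ hθ
    _ = (∫⁻ y, ‖deriv φ y‖ₑ) * ∫⁻ θ : ℝ, ‖(charFun μ θ - charFun ν θ) / θ‖ₑ :=
        lintegral_const_mul _ (by fun_prop)

end Fourier

theorem lintegral_enorm_deriv_of_monotone {f : ℝ → ℝ} (hf : Monotone f)
    (hf' : Differentiable ℝ f) : ∫⁻ y, ‖deriv f y‖ₑ = volume (range f) := by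
  have hvol := lintegral_deriv_eq_volume_image_of_monotoneOn MeasurableSet.univ
    (fun y _ => (hf' y).hasDerivAt.hasDerivWithinAt) (hf.monotoneOn univ)
  simpa only [Measure.restrict_univ, image_univ, Real.enorm_of_nonneg hf.deriv_nonneg] using hvol

theorem lintegral_enorm_deriv_sub_le_of_monotone {f g : ℝ → ℝ} (hf : Monotone f)
    (hg : Monotone g) (hf' : Differentiable ℝ f) (hg' : Differentiable ℝ g) :
    ∫⁻ y, ‖deriv (fun y => f y - g y) y‖ₑ ≤ volume (range f) + volume (range g) :=
  calc ∫⁻ y, ‖deriv (fun y => f y - g y) y‖ₑ ≤ ∫⁻ y, (‖deriv f y‖ₑ + ‖deriv g y‖ₑ) :=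
        lintegral_mono fun y => by
          rw [deriv_fun_sub (hf' y) (hg' y)]
          exact enorm_sub_le
    _ = volume (range f) + volume (range g) := by
        rw [lintegral_add_left (measurable_deriv f).enorm, lintegral_enorm_deriv_of_monotone hf hf',
          lintegral_enorm_deriv_of_monotone hg hg']

theorem enorm_complex_ofReal (r : ℝ) : ‖(r : ℂ)‖ₑ = ‖r‖ₑ := by
  simp only [enorm_eq_nnnorm, Complex.nnnorm_real]

/-- A smooth approximation to the indicator function of `(-∞, x]` for large `k`, with compact
support when `0 < k`. -/
noncomputable def smoothCutoff (k x y : ℝ) : ℝ :=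
  Real.smoothTransition (y + k) - Real.smoothTransition (k * (y - x))

section smoothCutoff

variable {k x y : ℝ}

theorem contDiff_smoothCutoff {n : ℕ∞} : ContDiff ℝ n (smoothCutoff k x) :=
  (Real.smoothTransition.contDiff.comp (by fun_prop)).sub
    (Real.smoothTransition.contDiff.comp (by fun_prop))

theorem abs_smoothCutoff_le_one : |smoothCutoff k x y| ≤ 1 :=
  abs_sub_le_of_nonneg_of_le (Real.smoothTransition.nonneg _) (Real.smoothTransition.le_one _)
    (Real.smoothTransition.nonneg _) (Real.smoothTransition.le_one _)

theorem hasCompactSupport_smoothCutoff (hk : 0 < k) : HasCompactSupport (smoothCutoff k x) := by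
  refine .intro (isCompact_Icc (a := min (-k) x) (b := max (1 - k) (x + 1 / k))) fun y hy => ?_
  rcases not_and_or.1 hy with hleft | hright
  · obtain ⟨hyk, hyx⟩ := lt_min_iff.1 (not_le.1 hleft)
    simp only [smoothCutoff]
    rw [Real.smoothTransition.zero_of_nonpos (by linarith),
      Real.smoothTransition.zero_of_nonpos (by nlinarith), sub_zero]
  · obtain ⟨hyk, hyx⟩ := max_lt_iff.1 (not_le.1 hright)
    have hsteep : 1 < k * (y - x) := by rwa [← div_lt_iff₀' hk, lt_sub_iff_add_lt']
    simp only [smoothCutoff]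
    rw [Real.smoothTransition.one_of_one_le (by linarith),
      Real.smoothTransition.one_of_one_le hsteep.le, sub_self]

theorem tendsto_smoothCutoff (x y : ℝ) :
    Tendsto (fun k => smoothCutoff k x y) atTop (𝓝 ((Iic x).indicator 1 y)) := by
  refine tendsto_const_nhds.congr' ?_
  filter_upwards [eventually_ge_atTop 0, eventually_ge_atTop (1 - y),
    eventually_ge_atTop (1 / (y - x))] with k hk hky hkx
  rw [smoothCutoff, Real.smoothTransition.one_of_one_le (by linarith)]
  rcases le_or_gt y x with hyx | hxy
  · rw [Real.smoothTransition.zero_of_nonpos (by nlinarith), sub_zero]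
    exact indicator_of_mem (mem_Iic.2 hyx) 1
  · rw [Real.smoothTransition.one_of_one_le ((div_le_iff₀ (sub_pos.2 hxy)).1 hkx), sub_self]
    exact indicator_of_notMem (notMem_Iic.2 hxy) 1

theorem lintegral_enorm_deriv_smoothCutoff_le (hk : 0 ≤ k) :
    ∫⁻ y, ‖deriv (smoothCutoff k x) y‖ₑ ≤ 2 := by
  have hdiff : Differentiable ℝ Real.smoothTransition :=
    Real.smoothTransition.contDiff.differentiable one_ne_zero
  have hvol (u : ℝ → ℝ) : volume (range fun y => Real.smoothTransition (u y)) ≤ 1 := by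
    have hsub : range (fun y => Real.smoothTransition (u y)) ⊆ Icc 0 1 := range_subset_iff.2
      fun y => ⟨Real.smoothTransition.nonneg _, Real.smoothTransition.le_one _⟩
    simpa using measure_mono (μ := volume) hsub
  calc ∫⁻ y, ‖deriv (smoothCutoff k x) y‖ₑ ≤
          volume (range fun y => Real.smoothTransition (y + k)) +
            volume (range fun y => Real.smoothTransition (k * (y - x))) :=
        lintegral_enorm_deriv_sub_le_of_monotone
          (Real.smoothTransition.monotone.comp fun _ _ h => by gcongr)
          (Real.smoothTransition.monotone.comp fun _ _ h => by gcongr)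
          (hdiff.comp (by fun_prop)) (hdiff.comp (by fun_prop))
    _ ≤ 1 + 1 := add_le_add (hvol _) (hvol _)
    _ = 2 := one_add_one_eq_two

theorem tendsto_integral_smoothCutoff (μ : Measure ℝ) [IsFiniteMeasure μ] (x : ℝ) :
    Tendsto (fun k => ∫ y, smoothCutoff k x y ∂μ) atTop (𝓝 (μ.real (Iic x))) := by
  rw [← integral_indicator_one measurableSet_Iic]
  exact tendsto_integral_filter_of_dominated_convergence 1
    (.of_forall fun k => (contDiff_smoothCutoff (n := 0)).continuous.aestronglyMeasurable)
    (.of_forall fun k => ae_of_all _ fun y => abs_smoothCutoff_le_one) (integrable_const 1)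
    (ae_of_all _ fun y => tendsto_smoothCutoff x y)

theorem deriv_ofReal_smoothCutoff :
    deriv (fun y => (smoothCutoff k x y : ℂ)) y = deriv (smoothCutoff k x) y :=
  (((contDiff_smoothCutoff (n := 1)).differentiable one_ne_zero) y).hasDerivAt.ofReal_comp.deriv

theorem enorm_integral_smoothCutoff_sub_le (hk : 0 < k) (μ ν : Measure ℝ) [IsFiniteMeasure μ]
    [IsFiniteMeasure ν] :
    ‖∫ y, smoothCutoff k x y ∂μ - ∫ y, smoothCutoff k x y ∂ν‖ₑ ≤
      ENNReal.ofReal (1 / π) * ∫⁻ θ : ℝ, ‖(charFun μ θ - charFun ν θ) / θ‖ₑ := by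
  have hsupp : HasCompactSupport fun y => (smoothCutoff k x y : ℂ) :=
    (hasCompactSupport_smoothCutoff hk).comp_left Complex.ofReal_zero
  let φ : 𝓢(ℝ, ℂ) :=
    hsupp.toSchwartzMap (Complex.ofRealCLM.contDiff.comp contDiff_smoothCutoff)
  have hφ (ρ : Measure ℝ) : ∫ y, φ y ∂ρ = (∫ y, smoothCutoff k x y ∂ρ : ℝ) :=
    integral_complex_ofReal
  have hvar : ∫⁻ y, ‖deriv φ y‖ₑ ≤ 2 :=
    calc ∫⁻ y, ‖deriv φ y‖ₑ = ∫⁻ y, ‖deriv (smoothCutoff k x) y‖ₑ := lintegral_congr fun y =>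
          (congrArg _ deriv_ofReal_smoothCutoff).trans (enorm_complex_ofReal _)
      _ ≤ 2 := lintegral_enorm_deriv_smoothCutoff_le hk.le
  calc ‖∫ y, smoothCutoff k x y ∂μ - ∫ y, smoothCutoff k x y ∂ν‖ₑ
      = ‖∫ y, φ y ∂μ - ∫ y, φ y ∂ν‖ₑ := by
        rw [hφ, hφ, ← Complex.ofReal_sub, enorm_complex_ofReal]
    _ ≤ ENNReal.ofReal (2 * π)⁻¹ *
          ((∫⁻ y, ‖deriv φ y‖ₑ) * ∫⁻ θ : ℝ, ‖(charFun μ θ - charFun ν θ) / θ‖ₑ) :=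
        enorm_integral_sub_integral_le φ μ ν
    _ ≤ ENNReal.ofReal (2 * π)⁻¹ *
          (2 * ∫⁻ θ : ℝ, ‖(charFun μ θ - charFun ν θ) / θ‖ₑ) := by gcongr
    _ = ENNReal.ofReal (1 / π) * ∫⁻ θ : ℝ, ‖(charFun μ θ - charFun ν θ) / θ‖ₑ := by
        rw [← mul_assoc, ← ENNReal.ofReal_ofNat, ← ENNReal.ofReal_mul (by positivity)]
        congr 2
        field_simp

end smoothCutoff

theorem measureReal_gaussianReal_Iic (x : ℝ) :
    (gaussianReal 0 1).real (Iic x) =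
      ∫ y in Iic x, Real.exp (-y ^ 2 / 2) / Real.sqrt (2 * π) := by
  rw [measureReal_def, gaussianReal_apply_eq_integral 0 one_ne_zero,
    ENNReal.toReal_ofReal (integral_nonneg (gaussianPDFReal_nonneg 0 1))]
  simp [gaussianPDFReal, div_eq_inv_mul]

theorem charFun_gaussianReal_zero_one (θ : ℝ) :
    charFun (gaussianReal 0 1) θ = Real.exp (-θ ^ 2 / 2) := by
  simp [charFun_gaussianReal, neg_div]

theorem berry_esseen_basic_inequality_general (μ ν : Measure ℝ) [IsFiniteMeasure μ]
    [IsFiniteMeasure ν] :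
    ⨆ x, ENNReal.ofReal |μ.real (Iic x) - ν.real (Iic x)| ≤
      ENNReal.ofReal (1 / π) * ∫⁻ θ : ℝ, ‖(charFun μ θ - charFun ν θ) / θ‖ₑ := by
  refine iSup_le fun x => ?_
  rw [← Real.enorm_eq_ofReal_abs]
  refine le_of_tendsto
    ((tendsto_integral_smoothCutoff μ x).sub (tendsto_integral_smoothCutoff ν x)).enorm ?_
  filter_upwards [eventually_gt_atTop 0] with k hk
  exact enorm_integral_smoothCutoff_sub_le hk μ ν

/-- Lemma A.3 (Berry–Esseen type basic inequality): for a Borel probability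
measure `μ` on `ℝ` with cdf `F` and characteristic function `f`,
`sup_x |F(x) - Φ(x)| ≤ (1/π) ∫ |(f(θ) - e^{-θ²/2})/θ| dθ`,
stated in `ℝ≥0∞` so that it is trivially true when the right-hand side is infinite. -/
theorem berry_esseen_basic_inequality
    (μ : Measure ℝ) [IsProbabilityMeasure μ] :
    (⨆ x : ℝ, ENNReal.ofReal
        |(μ (Set.Iic x)).toReal -
          ∫ y in Set.Iic x, Real.exp (-y^2/2) / Real.sqrt (2 * Real.pi)|)
      ≤ ENNReal.ofReal (1 / Real.pi) *
        ∫⁻ θ : ℝ,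
          (‖((∫ y : ℝ, Complex.exp ((θ : ℂ) * (y : ℂ) * Complex.I) ∂μ)
              - (Real.exp (-θ^2/2) : ℂ)) / (θ : ℂ)‖₊ : ENNReal) := by
  simpa only [measureReal_gaussianReal_Iic, charFun_gaussianReal_zero_one, ← measureReal_def,
    charFun_apply_real (μ := μ), enorm_eq_nnnorm]
    using berry_esseen_basic_inequality_general μ (gaussianReal 0 1)
end

section
/- If ∑_{n=1}^∞ sup_{x∈ℝ} |P(Z_n ≤ x | G_n) − Φ(x)| < +∞ P-almost surely, then limsup_{n→∞} Z_n/√(2 log n) ≤ 1 P-almost surely. If, in addition, there exists k ∈ ℕ such that Z_n is G_{n+k}-measurable for each n ≥ 1, then limsup_{n→∞} Z_n/√(2 log n) = 1 P-almost surely. -/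
open MeasureTheory Filter

/-!
Fix thresholds `x n`. The hypothesis lets one replace the conditional probabilities
`P(Z n > x n | G n)` by the Gaussian tails at `x n`, up to an almost surely summable error. A
conditional Borel–Cantelli lemma then turns summability of these tails into `Z n ≤ x n` eventually,
and divergence into `Z n > x n` infinitely often. For `x n = c √(2 log n)` the Gaussian tail is
`n ^ (-c ^ 2)` up to subpolynomial factors, so the two regimes are `c > 1` and `c < 1`.

In the divergent case `{Z n > x n}` is only known to lie in `G (n + k)`. Along each residue class
modulo `k` the lag becomes one and Lévy's extension of the Borel–Cantelli lemmas applies; if the sum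
over all `n` diverges, so does the sum over some residue class.
-/

open ProbabilityTheory Topology
open scoped NNReal ENNReal

section ConditionalBorelCantelli

variable {Ω : Type*} {𝒢 m : MeasurableSpace Ω} {P : Measure Ω}

theorem ae_condProb_nonneg (𝒢 : MeasurableSpace Ω) (A : Set Ω) : ∀ᵐ ω ∂P, 0 ≤ (P⟦A | 𝒢⟧) ω :=
  condExp_nonneg <| .of_forall <| Set.indicator_nonneg fun _ _ => zero_le_one

variable [IsFiniteMeasure P]

theorem setIntegral_condProb (h𝒢 : 𝒢 ≤ m) {A B : Set Ω}
    (hA : MeasurableSet A) (hB : MeasurableSet[𝒢] B) :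
    ∫ ω in B, (P⟦A | 𝒢⟧) ω ∂P = P.real (A ∩ B) := by
  rw [setIntegral_condExp h𝒢 ((integrable_const _).indicator hA) hB, setIntegral_indicator hA,
    setIntegral_const, smul_eq_mul, mul_one, Set.inter_comm]

theorem condProb_compl (h𝒢 : 𝒢 ≤ m) {A : Set Ω} (hA : MeasurableSet A) :
    P⟦Aᶜ | 𝒢⟧ =ᵐ[P] fun ω => 1 - (P⟦A | 𝒢⟧) ω := by
  have hsub := condExp_sub (integrable_const (μ := P) (1 : ℝ))
    ((integrable_const (μ := P) (1 : ℝ)).indicator hA) 𝒢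
  rw [condExp_const h𝒢] at hsub
  rw [Set.indicator_compl]
  exact hsub

theorem sum_indicator_partialSum_le {p : ℕ → ℝ} (hp : ∀ n, 0 ≤ p n) {M : ℝ} (hM : 0 ≤ M) (N : ℕ) :
    ∑ n ∈ Finset.range N, {n | ∑ i ∈ Finset.range (n + 1), p i ≤ M}.indicator p n ≤ M := by
  induction N with
  | zero => simpa using hM
  | succ N ih =>
    by_cases hN : ∑ i ∈ Finset.range (N + 1), p i ≤ M
    · exact (Finset.sum_le_sum fun n _ => Set.indicator_le_self' (fun n _ => hp n) n).trans hN
    · rw [Finset.sum_range_succ, Set.indicator_of_notMem (by exact hN), add_zero]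
      exact ih

theorem summable_measureReal_inter_partialSum_condProb_le (ℱ : Filtration ℕ m) {A : ℕ → Set Ω}
    (hA : ∀ n, MeasurableSet (A n)) {M : ℝ} (hM : 0 ≤ M) :
    Summable fun n =>
      P.real (A n ∩ {ω | ∑ i ∈ Finset.range (n + 1), (P⟦A i | ℱ i⟧) ω ≤ M}) := by
  set B : ℕ → Set Ω := fun n => {ω | ∑ i ∈ Finset.range (n + 1), (P⟦A i | ℱ i⟧) ω ≤ M}
  have hB (n : ℕ) : MeasurableSet[ℱ n] (B n) := by
    have hpartial : StronglyMeasurable[ℱ n]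
        fun ω => ∑ i ∈ Finset.range (n + 1), (P⟦A i | ℱ i⟧) ω :=
      Finset.stronglyMeasurable_fun_sum _ fun i hi =>
        stronglyMeasurable_condExp.mono (ℱ.mono (Finset.mem_range_succ_iff.1 hi))
    exact hpartial.measurable measurableSet_Iic
  have hint (n : ℕ) : Integrable ((B n).indicator (P⟦A n | ℱ n⟧)) P :=
    integrable_condExp.indicator (ℱ.le n _ (hB n))
  refine summable_of_sum_range_le (c := ∫ _, M ∂P) (fun n => measureReal_nonneg) fun N => ?_
  calc ∑ n ∈ Finset.range N, P.real (A n ∩ B n)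
      = ∑ n ∈ Finset.range N, ∫ ω, (B n).indicator (P⟦A n | ℱ n⟧) ω ∂P := by
        refine Finset.sum_congr rfl fun n _ => ?_
        rw [integral_indicator (ℱ.le n _ (hB n)), setIntegral_condProb (ℱ.le n) (hA n) (hB n)]
    _ = ∫ ω, ∑ n ∈ Finset.range N, (B n).indicator (P⟦A n | ℱ n⟧) ω ∂P :=
        (integral_finsetSum _ fun n _ => hint n).symm
    _ ≤ ∫ _, M ∂P := by
        refine integral_mono_ae (integrable_finsetSum _ fun n _ => hint n) (integrable_const M) ?_
        filter_upwards [ae_all_iff.2 fun n => ae_condProb_nonneg (P := P) (ℱ n) (A n)] with ω hω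
        exact sum_indicator_partialSum_le hω hM N

theorem ae_eventually_notMem_of_summable_condProb (ℱ : Filtration ℕ m) {A : ℕ → Set Ω}
    (hA : ∀ n, MeasurableSet (A n)) :
    ∀ᵐ ω ∂P, Summable (fun n => (P⟦A n | ℱ n⟧) ω) → ∀ᶠ n in atTop, ω ∉ A n := by
  have htrunc (M : ℕ) : ∀ᵐ ω ∂P, ∀ᶠ n in atTop,
      ω ∉ A n ∩ {ω | ∑ i ∈ Finset.range (n + 1), (P⟦A i | ℱ i⟧) ω ≤ M} := by
    refine ae_eventually_notMem ?_
    simpa only [ofReal_measureReal (measure_ne_top P _)] using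
      (summable_measureReal_inter_partialSum_condProb_le (P := P) ℱ hA
        M.cast_nonneg).tsum_ofReal_ne_top
  filter_upwards [ae_all_iff.2 htrunc, ae_all_iff.2 fun n => ae_condProb_nonneg (ℱ n) (A n)]
    with ω hω hnonneg hsum
  obtain ⟨M, hM⟩ := exists_nat_ge (∑' n, (P⟦A n | ℱ n⟧) ω)
  filter_upwards [hω M] with n hn hmem
  exact hn ⟨hmem, (hsum.sum_le_tsum _ fun i _ => hnonneg i).trans hM⟩

theorem ae_frequently_mem_of_not_summable_condProb_of_lag_one (ℱ : Filtration ℕ m) {A : ℕ → Set Ω}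
    (hA : ∀ n, MeasurableSet[ℱ (n + 1)] (A n)) :
    ∀ᵐ ω ∂P, ¬ Summable (fun n => (P⟦A n | ℱ n⟧) ω) → ∃ᶠ n in atTop, ω ∈ A n := by
  let s : ℕ → Set Ω
    | 0 => ∅
    | n + 1 => A n
  have hs : ∀ n, MeasurableSet[ℱ n] (s n)
    | 0 => @MeasurableSet.empty _ (ℱ 0)
    | n + 1 => hA n
  filter_upwards [ae_mem_limsup_atTop_iff P hs,
    ae_all_iff.2 fun n => ae_condProb_nonneg (ℱ n) (A n)] with ω hlevy hnonneg hsum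
  rw [not_summable_iff_tendsto_nat_atTop_of_nonneg hnonneg] at hsum
  have hmem : ω ∈ limsup s atTop := hlevy.2 hsum
  rw [← limsup_nat_add s 1] at hmem
  exact mem_limsup_iff_frequently_mem.1 hmem

theorem summable_of_forall_summable_residueClass {f : ℕ → ℝ} (k : ℕ) [NeZero k]
    (hf : ∀ r : ℕ, Summable fun j => f (k * j + r)) : Summable f := by
  rw [Finset.sum_indicator_mod k f, Finset.sum_fn]
  refine summable_sum fun a _ => ?_
  simpa only [ZMod.natCast_zmod_val] using
    (summable_indicator_mod_iff_summable k a.val f).2 (hf a.val)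

theorem ae_frequently_mem_of_not_summable_condProb (ℱ : Filtration ℕ m) (k : ℕ) {A : ℕ → Set Ω}
    (hA : ∀ n, MeasurableSet[ℱ (n + k)] (A n)) :
    ∀ᵐ ω ∂P, ¬ Summable (fun n => (P⟦A n | ℱ n⟧) ω) → ∃ᶠ n in atTop, ω ∈ A n := by
  have hresidue (r : ℕ) : ∀ᵐ ω ∂P,
      ¬ Summable (fun j => (P⟦A ((k + 1) * j + r) | ℱ ((k + 1) * j + r)⟧) ω) →
        ∃ᶠ j in atTop, ω ∈ A ((k + 1) * j + r) := by
    let ℱr : Filtration ℕ m :=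
      { seq := fun j => ℱ ((k + 1) * j + r)
        mono' := fun i j hij => ℱ.mono (by gcongr)
        le' := fun j => ℱ.le _ }
    refine ae_frequently_mem_of_not_summable_condProb_of_lag_one ℱr fun j => ?_
    exact ℱ.mono (by lia) _ (hA ((k + 1) * j + r))
  filter_upwards [ae_all_iff.2 hresidue] with ω hω hsum
  obtain ⟨r, hr⟩ := not_forall.1 (mt (summable_of_forall_summable_residueClass (k + 1)) hsum)
  have htendsto : Tendsto (fun j => (k + 1) * j + r) atTop atTop :=
    tendsto_atTop_mono (fun j => by simp only [id]; nlinarith) tendsto_id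
  exact htendsto.frequently (hω r hr)

end ConditionalBorelCantelli

section Limsup

/- If `u` is unbounded below along `f`, the real `limsup` is the junk value `0`; hence `hc`. -/
theorem real_limsup_le_of_eventually_le {ι : Type*} {f : Filter ι} {u : ι → ℝ} {c : ℝ}
    (hc : 0 ≤ c) (h : ∀ᶠ i in f, u i ≤ c) : limsup u f ≤ c := by
  rw [limsup_eq]
  by_cases hbdd : BddBelow {a | ∀ᶠ i in f, u i ≤ a}
  · exact csInf_le hbdd h
  · rwa [Real.sInf_of_not_bddBelow hbdd]

variable {Ω ι : Type*} {m : MeasurableSpace Ω} {P : Measure Ω} {f : Filter ι} {X : ι → Ω → ℝ}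
  {L : ℝ}

theorem ae_limsup_le_of_forall_gt (hL : 0 ≤ L)
    (h : ∀ c, L < c → ∀ᵐ ω ∂P, ∀ᶠ i in f, X i ω ≤ c) :
    ∀ᵐ ω ∂P, limsup (fun i => X i ω) f ≤ L := by
  obtain ⟨u, -, hLu, hu⟩ := exists_seq_strictAnti_tendsto L
  filter_upwards [ae_all_iff.2 fun j => h (u j) (hLu j)] with ω hω
  exact ge_of_tendsto' hu fun j => real_limsup_le_of_eventually_le (hL.trans (hLu j).le) (hω j)

theorem ae_le_limsup_of_forall_lt
    (hbdd : ∀ᵐ ω ∂P, f.IsBoundedUnder (· ≤ ·) fun i => X i ω)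
    (h : ∀ c, c < L → ∀ᵐ ω ∂P, ∃ᶠ i in f, c ≤ X i ω) :
    ∀ᵐ ω ∂P, L ≤ limsup (fun i => X i ω) f := by
  obtain ⟨u, -, huL, hu⟩ := exists_seq_strictMono_tendsto L
  filter_upwards [hbdd, ae_all_iff.2 fun j => h (u j) (huL j)] with ω hω_bdd hω
  exact le_of_tendsto' hu fun j => le_limsup_of_frequently_le (hω j) hω_bdd

end Limsup

section KolmogorovDistance

variable {Ω : Type*} {𝒢 m : MeasurableSpace Ω}

/-- The Kolmogorov distance between the conditional law of `Z` given `𝒢` and the law `ν`, as a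
random variable. It is the supremum over all real `x` of differences of arbitrary versions of
conditional probabilities, so it is only meaningful pointwise, not up to almost sure equality;
`ℝ≥0∞`-valued so that the supremum exists. -/
noncomputable def condKolmogorovDist (P : Measure Ω) (𝒢 : MeasurableSpace Ω) (Z : Ω → ℝ)
    (ν : Measure ℝ) (ω : Ω) : ℝ≥0∞ :=
  ⨆ x : ℝ, ENNReal.ofReal |(P⟦Z ⁻¹' Set.Iic x | 𝒢⟧) ω - ν.real (Set.Iic x)|

theorem condKolmogorovDist_eq_iSup_ite (P : Measure Ω) (𝒢 : MeasurableSpace Ω) (Z : Ω → ℝ)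
    (ν : Measure ℝ) (ω : Ω) :
    condKolmogorovDist P 𝒢 Z ν ω = ⨆ x : ℝ, ENNReal.ofReal
      |(P[fun ω' => if Z ω' ≤ x then (1 : ℝ) else 0 | 𝒢]) ω - ν.real (Set.Iic x)| := by
  have hind (x : ℝ) : (Z ⁻¹' Set.Iic x).indicator (fun _ => (1 : ℝ)) =
      fun ω' => if Z ω' ≤ x then 1 else 0 := by
    classical exact funext fun ω' => Set.indicator_apply _ _ ω'
  simp only [condKolmogorovDist, hind]

variable {P : Measure Ω} [IsFiniteMeasure P] {ν : Measure ℝ} [IsProbabilityMeasure ν]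

theorem ae_abs_condProb_Ioi_sub_le_condKolmogorovDist (h𝒢 : 𝒢 ≤ m)
    {Z : Ω → ℝ} (hZ : Measurable Z) (x : ℝ) :
    ∀ᵐ ω ∂P, ENNReal.ofReal |(P⟦Z ⁻¹' Set.Ioi x | 𝒢⟧) ω - ν.real (Set.Ioi x)|
      ≤ condKolmogorovDist P 𝒢 Z ν ω := by
  filter_upwards [condProb_compl (P := P) h𝒢 (hZ (measurableSet_Iic (a := x)))] with ω hω
  rw [← Set.preimage_compl, Set.compl_Iic] at hω
  rw [hω, ← Set.compl_Iic, probReal_compl_eq_one_sub measurableSet_Iic, sub_sub_sub_cancel_left,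
    abs_sub_comm]
  exact le_iSup (fun x => ENNReal.ofReal |(P⟦Z ⁻¹' Set.Iic x | 𝒢⟧) ω - ν.real (Set.Iic x)|) x

theorem ae_summable_condProb_Ioi_sub {ι : Type*} [Countable ι] {𝒢 : ι → MeasurableSpace Ω}
    (h𝒢 : ∀ i, 𝒢 i ≤ m) {Z : ι → Ω → ℝ} (hZ : ∀ i, Measurable (Z i))
    (hsum : ∀ᵐ ω ∂P, ∑' i, condKolmogorovDist P (𝒢 i) (Z i) ν ω < ⊤) (x : ι → ℝ) :
    ∀ᵐ ω ∂P, Summable fun i =>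
      (P⟦Z i ⁻¹' Set.Ioi (x i) | 𝒢 i⟧) ω - ν.real (Set.Ioi (x i)) := by
  filter_upwards [hsum, ae_all_iff.2 fun i =>
    ae_abs_condProb_Ioi_sub_le_condKolmogorovDist (P := P) (ν := ν) (h𝒢 i) (hZ i) (x i)]
    with ω hω hle
  have habs := ENNReal.summable_toReal (ne_top_of_le_ne_top hω.ne (ENNReal.tsum_le_tsum hle))
  simp only [ENNReal.toReal_ofReal (abs_nonneg _)] at habs
  exact habs.of_abs

variable {ℱ : Filtration ℕ m} {Z : ℕ → Ω → ℝ} (hZ : ∀ n, Measurable (Z n))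
  (hsum : ∀ᵐ ω ∂P, ∑' n, condKolmogorovDist P (ℱ n) (Z n) ν ω < ⊤)

include hZ hsum

theorem ae_eventually_le_of_summable_tail {x : ℕ → ℝ}
    (hx : Summable fun n => ν.real (Set.Ioi (x n))) :
    ∀ᵐ ω ∂P, ∀ᶠ n in atTop, Z n ω ≤ x n := by
  filter_upwards [ae_summable_condProb_Ioi_sub ℱ.le hZ hsum x,
    ae_eventually_notMem_of_summable_condProb ℱ fun n => hZ n (measurableSet_Ioi (a := x n))]
    with ω hdiff hBC
  have hcond : Summable fun n => (P⟦Z n ⁻¹' Set.Ioi (x n) | ℱ n⟧) ω := by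
    simpa only [sub_add_cancel] using hdiff.add hx
  filter_upwards [hBC hcond] with n hn
  exact not_lt.1 hn

theorem ae_frequently_lt_of_not_summable_tail {k : ℕ} (hZℱ : ∀ n, Measurable[ℱ (n + k)] (Z n))
    {x : ℕ → ℝ} (hx : ¬ Summable fun n => ν.real (Set.Ioi (x n))) :
    ∀ᵐ ω ∂P, ∃ᶠ n in atTop, x n < Z n ω := by
  filter_upwards [ae_summable_condProb_Ioi_sub ℱ.le hZ hsum x,
    ae_frequently_mem_of_not_summable_condProb ℱ k fun n => hZℱ n (measurableSet_Ioi (a := x n))]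
    with ω hdiff hBC
  refine hBC fun hcond => hx ?_
  simpa only [sub_sub_cancel] using hcond.sub hdiff

variable {a : ℕ → ℝ} (ha : ∀ᶠ n in atTop, 0 < a n)
  (hgt : ∀ c, 1 < c → Summable fun n => ν.real (Set.Ioi (c * a n)))

include ha hgt

theorem ae_eventually_div_le {c : ℝ} (hc : 1 < c) :
    ∀ᵐ ω ∂P, ∀ᶠ n in atTop, Z n ω / a n ≤ c := by
  filter_upwards [ae_eventually_le_of_summable_tail hZ hsum (hgt c hc)] with ω hω
  filter_upwards [hω, ha] with n hn han
  exact (div_le_iff₀ han).2 hn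

theorem ae_limsup_div_le_one :
    ∀ᵐ ω ∂P, limsup (fun n => Z n ω / a n) atTop ≤ 1 :=
  ae_limsup_le_of_forall_gt zero_le_one fun _ hc => ae_eventually_div_le hZ hsum ha hgt hc

theorem ae_limsup_div_eq_one {k : ℕ} (hZℱ : ∀ n, Measurable[ℱ (n + k)] (Z n))
    (hlt : ∀ c, c < 1 → ¬ Summable fun n => ν.real (Set.Ioi (c * a n))) :
    ∀ᵐ ω ∂P, limsup (fun n => Z n ω / a n) atTop = 1 := by
  have hfreq (c : ℝ) (hc : c < 1) : ∀ᵐ ω ∂P, ∃ᶠ n in atTop, c ≤ Z n ω / a n := by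
    filter_upwards [ae_frequently_lt_of_not_summable_tail hZ hsum hZℱ (hlt c hc)] with ω hω
    exact (hω.and_eventually ha).mono fun n ⟨hn, han⟩ => (le_div_iff₀ han).2 hn.le
  have hbdd : ∀ᵐ ω ∂P, atTop.IsBoundedUnder (· ≤ ·) fun n => Z n ω / a n := by
    filter_upwards [ae_eventually_div_le hZ hsum ha hgt one_lt_two] with ω hω
    exact ⟨2, hω⟩
  filter_upwards [ae_limsup_div_le_one hZ hsum ha hgt, ae_le_limsup_of_forall_lt hbdd hfreq]
    with ω hle hge
  exact le_antisymm hle hge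

end KolmogorovDistance

section GaussianTail

theorem gaussianReal_real_eq_setIntegral (μ : ℝ) {v : ℝ≥0} (hv : v ≠ 0) (s : Set ℝ) :
    (gaussianReal μ v).real s = ∫ y in s, gaussianPDFReal μ v y := by
  rw [measureReal_def, gaussianReal_apply_eq_integral μ hv,
    ENNReal.toReal_ofReal (integral_nonneg fun y => gaussianPDFReal_nonneg μ v y)]

theorem gaussianPDFReal_zero_one (y : ℝ) :
    gaussianPDFReal 0 1 y = Real.exp (-y ^ 2 / 2) / Real.sqrt (2 * Real.pi) := by
  rw [gaussianPDFReal, NNReal.coe_one, mul_one, mul_one, sub_zero, inv_mul_eq_div]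

theorem antitoneOn_gaussianPDFReal (μ : ℝ) (v : ℝ≥0) :
    AntitoneOn (gaussianPDFReal μ v) (Set.Ici μ) := by
  intro x hx y _ hxy
  have hμx : 0 ≤ x - μ := sub_nonneg.2 hx
  rw [gaussianPDFReal, gaussianPDFReal]
  gcongr

theorem gaussianPDFReal_add_one_le_gaussianReal_Ioi {μ x : ℝ} {v : ℝ≥0} (hv : v ≠ 0)
    (hx : μ ≤ x) : gaussianPDFReal μ v (x + 1) ≤ (gaussianReal μ v).real (Set.Ioi x) :=
  calc gaussianPDFReal μ v (x + 1)
      = ∫ _ in Set.Ioc x (x + 1), gaussianPDFReal μ v (x + 1) := by simp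
    _ ≤ ∫ y in Set.Ioc x (x + 1), gaussianPDFReal μ v y := by
        refine setIntegral_mono_on (by simp) (integrable_gaussianPDFReal μ v).integrableOn
          measurableSet_Ioc fun y hy => ?_
        exact antitoneOn_gaussianPDFReal μ v (hx.trans hy.1.le) (hx.trans (by simp)) hy.2
    _ = (gaussianReal μ v).real (Set.Ioc x (x + 1)) :=
        (gaussianReal_real_eq_setIntegral μ hv _).symm
    _ ≤ (gaussianReal μ v).real (Set.Ioi x) := measureReal_mono Set.Ioc_subset_Ioi_self

theorem gaussianReal_Ioi_le_exp (v : ℝ≥0) {x : ℝ} (hx : 0 ≤ x) :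
    (gaussianReal 0 v).real (Set.Ioi x) ≤ Real.exp (-x ^ 2 / (2 * v)) := by
  have hsubG : HasSubgaussianMGF id v (gaussianReal 0 v) :=
    { integrable_exp_mul := integrable_exp_mul_gaussianReal
      mgf_le := fun t => by simp [mgf_id_gaussianReal] }
  exact (measureReal_mono Set.Ioi_subset_Ici_self).trans (hsubG.measure_ge_le hx)

theorem sq_sqrt_two_mul_log_natCast (n : ℕ) :
    Real.sqrt (2 * Real.log n) ^ 2 = 2 * Real.log n :=
  Real.sq_sqrt (mul_nonneg zero_le_two (Real.log_natCast_nonneg n))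

theorem tendsto_sqrt_two_mul_log_natCast_atTop :
    Tendsto (fun n : ℕ => Real.sqrt (2 * Real.log n)) atTop atTop :=
  Real.tendsto_sqrt_atTop.comp <|
    (Real.tendsto_log_atTop.comp tendsto_natCast_atTop_atTop).const_mul_atTop two_pos

theorem gaussianPDFReal_sqrt_two_mul_log {n : ℕ} (hn : 0 < n) :
    gaussianPDFReal 0 1 (Real.sqrt (2 * Real.log n)) = (n : ℝ)⁻¹ / Real.sqrt (2 * Real.pi) := by
  rw [gaussianPDFReal_zero_one, sq_sqrt_two_mul_log_natCast, neg_div,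
    mul_div_cancel_left₀ _ two_ne_zero, Real.exp_neg, Real.exp_log (Nat.cast_pos.2 hn)]

theorem summable_gaussianReal_Ioi_mul_sqrt_log {c : ℝ} (hc : 1 < c) :
    Summable fun n : ℕ => (gaussianReal 0 1).real (Set.Ioi (c * Real.sqrt (2 * Real.log n))) := by
  have hpow : Summable fun n : ℕ => (n : ℝ) ^ (-c ^ 2) := Real.summable_nat_rpow.2 (by nlinarith)
  refine hpow.of_norm_bounded_eventually_nat ?_
  filter_upwards [eventually_gt_atTop 0] with n hn
  rw [Real.norm_of_nonneg measureReal_nonneg]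
  calc (gaussianReal 0 1).real (Set.Ioi (c * Real.sqrt (2 * Real.log n)))
      ≤ Real.exp (-(c * Real.sqrt (2 * Real.log n)) ^ 2 / (2 * (1 : ℝ≥0))) :=
        gaussianReal_Ioi_le_exp 1 (by positivity)
    _ = (n : ℝ) ^ (-c ^ 2) := by
        rw [mul_pow, sq_sqrt_two_mul_log_natCast, Real.rpow_def_of_pos (Nat.cast_pos.2 hn),
          NNReal.coe_one]
        ring_nf

theorem not_summable_gaussianReal_Ioi_mul_sqrt_log {c : ℝ} (hc : c < 1) :
    ¬ Summable fun n : ℕ =>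
      (gaussianReal 0 1).real (Set.Ioi (c * Real.sqrt (2 * Real.log n))) := by
  intro hsum
  have hharmonic : Summable fun n : ℕ => (n : ℝ)⁻¹ / Real.sqrt (2 * Real.pi) := by
    refine hsum.of_norm_bounded_eventually_nat ?_
    filter_upwards [eventually_gt_atTop 0,
      tendsto_sqrt_two_mul_log_natCast_atTop.eventually_ge_atTop 1,
      (tendsto_sqrt_two_mul_log_natCast_atTop.const_mul_atTop
        (sub_pos.2 hc)).eventually_ge_atTop 1] with n hn hone hgap
    rw [Real.norm_of_nonneg (by positivity), ← gaussianPDFReal_sqrt_two_mul_log hn]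
    generalize Real.sqrt (2 * Real.log n) = x at hone hgap ⊢
    calc gaussianPDFReal 0 1 x
        = gaussianPDFReal 0 1 (x - 1 + 1) := by rw [sub_add_cancel]
      _ ≤ (gaussianReal 0 1).real (Set.Ioi (x - 1)) :=
          gaussianPDFReal_add_one_le_gaussianReal_Ioi one_ne_zero (sub_nonneg.2 hone)
      _ ≤ (gaussianReal 0 1).real (Set.Ioi (c * x)) :=
          measureReal_mono (Set.Ioi_subset_Ioi (by linarith))
  rw [summable_div_const_iff (by positivity)] at hharmonic
  exact Real.not_summable_natCast_inv hharmonic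

end GaussianTail

/-- Lemma 2.3 (Asmussen–Hering, Appendix 7.2): if the conditional distributions of
`Z_n` given `G_n` approach the standard normal distribution summably fast in
Kolmogorov distance, then `limsup_n Z_n/√(2 log n) ≤ 1` a.s.; if moreover `Z_n` is
`G_{n+k}`-measurable for some fixed `k`, then the limsup equals `1` a.s. -/
theorem limsup_of_conditional_normal_approximation
    {Ω : Type*} [m : MeasurableSpace Ω] (P : Measure Ω) [IsProbabilityMeasure P]
    (G : ℕ → MeasurableSpace Ω) (hGmono : Monotone G) (hGle : ∀ n, G n ≤ m)
    (Z : ℕ → Ω → ℝ) (hZmeas : ∀ n, Measurable (Z n))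
    (Φ : ℝ → ℝ)
    (hΦ : ∀ x, Φ x = ∫ y in Set.Iic x, Real.exp (-y^2/2) / Real.sqrt (2 * Real.pi))
    (hsum : ∀ᵐ ω ∂P,
      (∑' n : ℕ, ⨆ x : ℝ, ENNReal.ofReal
        |(P[(fun ω' => if Z (n+1) ω' ≤ x then (1:ℝ) else 0) | G (n+1)]) ω - Φ x|) < ⊤) :
    (∀ᵐ ω ∂P,
      limsup (fun n : ℕ => Z n ω / Real.sqrt (2 * Real.log n)) atTop ≤ 1) ∧
    ((∃ k : ℕ, ∀ n, 1 ≤ n → Measurable[G (n + k)] (Z n)) →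
      ∀ᵐ ω ∂P,
        limsup (fun n : ℕ => Z n ω / Real.sqrt (2 * Real.log n)) atTop = 1) := by
  let ℱ : Filtration ℕ m :=
    { seq := fun n => G (n + 1)
      mono' := fun i j hij => hGmono (by gcongr)
      le' := fun n => hGle _ }
  have hΦ_gaussian (x : ℝ) : Φ x = (gaussianReal 0 1).real (Set.Iic x) := by
    simp only [hΦ, gaussianReal_real_eq_setIntegral 0 one_ne_zero, gaussianPDFReal_zero_one]
  have hdist : ∀ᵐ ω ∂P,
      ∑' n, condKolmogorovDist P (ℱ n) (Z (n + 1)) (gaussianReal 0 1) ω < ⊤ := by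
    simpa only [condKolmogorovDist_eq_iSup_ite, hΦ_gaussian] using hsum
  have ha : ∀ᶠ n : ℕ in atTop, 0 < Real.sqrt (2 * Real.log (n + 1 : ℕ)) :=
    (tendsto_add_atTop_nat 1).eventually
      (tendsto_sqrt_two_mul_log_natCast_atTop.eventually_gt_atTop 0)
  have htail (c : ℝ) : (Summable fun n : ℕ =>
      (gaussianReal 0 1).real (Set.Ioi (c * Real.sqrt (2 * Real.log (n + 1 : ℕ))))) ↔
      Summable fun n : ℕ => (gaussianReal 0 1).real (Set.Ioi (c * Real.sqrt (2 * Real.log n))) :=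
    summable_nat_add_iff (f := fun n : ℕ =>
      (gaussianReal 0 1).real (Set.Ioi (c * Real.sqrt (2 * Real.log n)))) 1
  have hshift (ω : Ω) : limsup (fun n : ℕ => Z n ω / Real.sqrt (2 * Real.log n)) atTop =
      limsup (fun n : ℕ => Z (n + 1) ω / Real.sqrt (2 * Real.log (n + 1 : ℕ))) atTop :=
    (limsup_nat_add _ 1).symm
  simp only [hshift]
  have hgt (c : ℝ) (hc : 1 < c) := (htail c).2 (summable_gaussianReal_Ioi_mul_sqrt_log hc)
  refine ⟨ae_limsup_div_le_one (fun n => hZmeas _) hdist ha hgt, fun ⟨k, hk⟩ => ?_⟩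
  refine ae_limsup_div_eq_one (k := k) (fun n => hZmeas _) hdist ha hgt (fun n => ?_) fun c hc =>
    mt (htail c).1 (not_summable_gaussianReal_Ioi_mul_sqrt_log hc)
  exact (hk (n + 1) (by lia)).mono (hGmono (by lia)) le_rfl
end
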